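/- arXiv:1512.02278 — 3 statements merged into one kernel-verified Lean document; each statement's English description precedes it below -/
import Mathlib

section
/- For every integer k > 1, the coefficient C_{k,1} satisfies C_{k,1} = ε_1 · Σ_{ℓ=2}^{k} A^{(0)}_{ℓ,1} · C_{k,ℓ}. -/
open Finset

/-- Product of adjacency factors along a path `ℓ → j₁ → ⋯ → jₚ → k`:
for each consecutive pair `(a, b)` in the list, a factor `A^{(a-1)}_{b,a}`. -/
def pathProd {R : Type*} [CommRing R] (A : ℕ → ℕ → ℕ → R) : List ℕ → R
  | [] => 1
  | [_] => 1
  | a :: b :: rest => A (a - 1) b a * pathProd A (b :: rest)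

/-- The quantity `𝒜_{k,ℓ}(Q)` for a subset `Q = {j₁ < ⋯ < jₚ} ⊆ {ℓ+1,…,k−1}`. -/
def calA {R : Type*} [CommRing R] (ε : ℕ → R) (A : ℕ → ℕ → ℕ → R)
    (k ℓ : ℕ) (Q : Finset ℕ) : R :=
  (ε ℓ * ∏ j ∈ Q, ε j) * pathProd A (ℓ :: ((Q.sort (· ≤ ·)) ++ [k]))

/-- The coefficients `C_{k,ℓ}`: `C_{k,k} = 1` and, for `k > ℓ`,
`C_{k,ℓ} = Σ_{Q ⊆ {ℓ+1,…,k−1}} 𝒜_{k,ℓ}(Q)`. -/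
def Cgen {R : Type*} [CommRing R] (ε : ℕ → R) (A : ℕ → ℕ → ℕ → R) (k ℓ : ℕ) : R :=
  if k = ℓ then 1 else ∑ Q ∈ (Finset.Ioo ℓ k).powerset, calA ε A k ℓ Q

/-- The modified weight `λ̂ₖ = Σ_{ℓ=1}^{k} C_{k,ℓ} λ_ℓ`. -/
def lamHat {R : Type*} [CommRing R] (ε : ℕ → R) (A : ℕ → ℕ → ℕ → R)
    (lam : ℕ → R) (k : ℕ) : R :=
  ∑ ℓ ∈ Finset.Icc 1 k, Cgen ε A k ℓ * lam ℓ

/-! Group the nonempty sets `Q ⊆ {m+1, …, k-1}` by their minimum `ℓ`. Cutting the path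
`m → ℓ → ⋯ → k` after its first edge gives
`𝒜_{k,m}({ℓ} ∪ Q') = ε_m A^{(m-1)}_{ℓ,m} 𝒜_{k,ℓ}(Q')` for `Q' ⊆ {ℓ+1, …, k-1}`, so the sets with
minimum `ℓ` contribute the `ℓ`-th term of the recurrence; `Q = ∅` contributes the term `ℓ = k`. -/

theorem sum_powerset_eq_add_sum_insert_min {α M : Type*} [LinearOrder α] [AddCommMonoid M]
    (s : Finset α) (f : Finset α → M) :
    ∑ Q ∈ s.powerset, f Q = f ∅ + ∑ a ∈ s, ∑ Q ∈ {b ∈ s | a < b}.powerset, f (insert a Q) := by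
  induction s using Finset.induction_on_min with
  | empty => simp
  | insert a s ha ih =>
    have has : a ∉ s := fun h => (ha a h).false
    have above_min : {b ∈ insert a s | a < b} = s := by
      rw [filter_insert, if_neg (lt_irrefl a), filter_true_of_mem ha]
    have above_of_mem : ∀ c ∈ s, {b ∈ insert a s | c < b} = {b ∈ s | c < b} := fun c hc => by
      rw [filter_insert, if_neg (ha c hc).not_gt]
    have sum_above : ∑ c ∈ s, ∑ Q ∈ {b ∈ insert a s | c < b}.powerset, f (insert c Q) =
        ∑ c ∈ s, ∑ Q ∈ {b ∈ s | c < b}.powerset, f (insert c Q) :=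
      sum_congr rfl fun c hc => by rw [above_of_mem c hc]
    rw [sum_powerset_insert has, sum_insert has, above_min, sum_above, ih, add_assoc,
      add_comm (∑ Q ∈ s.powerset, f (insert a Q))]

theorem Ioo_filter_gt {α : Type*} [LinearOrder α] [LocallyFiniteOrder α] (a b c : α) :
    {x ∈ Ioo a b | c < x} = Ioo (max a c) b := by grind

section

variable {R : Type*} [CommRing R] (ε : ℕ → R) (A : ℕ → ℕ → ℕ → R)

theorem calA_empty (k m : ℕ) : calA ε A k m ∅ = ε m * A (m - 1) k m := by
  simp [calA, pathProd]

theorem calA_insert (k m : ℕ) {ℓ : ℕ} {Q : Finset ℕ} (hQ : ∀ j ∈ Q, ℓ < j) :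
    calA ε A k m (insert ℓ Q) = ε m * A (m - 1) ℓ m * calA ε A k ℓ Q := by
  have hℓ : ℓ ∉ Q := fun h => (hQ ℓ h).false
  have sort_eq : (insert ℓ Q).sort (· ≤ ·) = ℓ :: Q.sort (· ≤ ·) :=
    sort_insert _ (fun j hj => (hQ j hj).le) hℓ
  rw [calA, calA, prod_insert hℓ, sort_eq, List.cons_append, pathProd]
  ring

theorem Cgen_self (k : ℕ) : Cgen ε A k k = 1 := if_pos rfl

theorem Cgen_of_lt {k m : ℕ} (h : m < k) :
    Cgen ε A k m = ∑ Q ∈ (Ioo m k).powerset, calA ε A k m Q := if_neg h.ne'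

theorem sum_calA_insert {k ℓ : ℕ} (m : ℕ) (h : ℓ < k) :
    ∑ Q ∈ (Ioo ℓ k).powerset, calA ε A k m (insert ℓ Q) =
      ε m * A (m - 1) ℓ m * Cgen ε A k ℓ := by
  rw [Cgen_of_lt ε A h, mul_sum]
  refine sum_congr rfl fun Q hQ => calA_insert ε A k m fun j hj => ?_
  exact (mem_Ioo.mp (mem_powerset.mp hQ hj)).1

/- The lower index is written `m + 1` so that the superscript `m` involves no truncated
subtraction. -/
theorem C_k1_recurrence_general {k m : ℕ} (h : m + 1 < k) :
    Cgen ε A k (m + 1) =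
      ε (m + 1) * ∑ ℓ ∈ Ioc (m + 1) k, A m ℓ (m + 1) * Cgen ε A k ℓ := by
  have sum_min_eq : ∀ ℓ ∈ Ioo (m + 1) k,
      ∑ Q ∈ {j ∈ Ioo (m + 1) k | ℓ < j}.powerset, calA ε A k (m + 1) (insert ℓ Q) =
        ε (m + 1) * (A m ℓ (m + 1) * Cgen ε A k ℓ) := fun ℓ hℓ => by
    obtain ⟨hmℓ, hℓk⟩ := mem_Ioo.mp hℓ
    rw [Ioo_filter_gt, max_eq_right hmℓ.le, sum_calA_insert ε A _ hℓk, Nat.add_sub_cancel,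
      mul_assoc]
  calc Cgen ε A k (m + 1)
      = calA ε A k (m + 1) ∅ + ∑ ℓ ∈ Ioo (m + 1) k,
          ∑ Q ∈ {j ∈ Ioo (m + 1) k | ℓ < j}.powerset, calA ε A k (m + 1) (insert ℓ Q) := by
        rw [Cgen_of_lt ε A h, sum_powerset_eq_add_sum_insert_min]
    _ = ε (m + 1) * (A m k (m + 1) * Cgen ε A k k) +
          ∑ ℓ ∈ Ioo (m + 1) k, ε (m + 1) * (A m ℓ (m + 1) * Cgen ε A k ℓ) := by
        rw [calA_empty, Nat.add_sub_cancel, Cgen_self, mul_one, sum_congr rfl sum_min_eq]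
    _ = ε (m + 1) * ∑ ℓ ∈ Ioc (m + 1) k, A m ℓ (m + 1) * Cgen ε A k ℓ := by
        rw [← Ioo_insert_right h, sum_insert right_notMem_Ioo, mul_add, mul_sum]

end

/-- For every integer `k > 1`,
`C_{k,1} = ε₁ · Σ_{ℓ=2}^{k} A^{(0)}_{ℓ,1} · C_{k,ℓ}`. -/
theorem C_k1_recurrence {R : Type*} [CommRing R] (ε : ℕ → R) (A : ℕ → ℕ → ℕ → R)
    (k : ℕ) (hk : 1 < k) :
    Cgen ε A k 1 = ε 1 * ∑ ℓ ∈ Finset.Icc 2 k, A 0 ℓ 1 * Cgen ε A k ℓ := by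
  simpa only [zero_add, Nat.reduceAdd, ← Icc_add_one_left_eq_Ioc] using
    C_k1_recurrence_general ε A (m := 0) hk
end

section
/- For every n ≥ 1 and all λ_1, …, λ_n ∈ R, the chain polynomial admits the spanning-subset closed form S_n(λ_1,…,λ_n) = Σ_{B ⊆ {1,…,n}} q^{n+1−|B|} · (∏_{k ∈ B} α(μ^B_k)) · (∏_{k ∉ B} β(μ^B_k)), where the modified weights are defined downward by μ^B_n = λ_n and, for 1 ≤ k < n, μ^B_k = λ_k + ε·μ^B_{k+1} if k+1 ∈ B and μ^B_k = λ_k + ε′·μ^B_{k+1} if k+1 ∉ B. -/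
open Finset

/-- The chain polynomial: `S₀ = q` and, for `n ≥ 1`,
`Sₙ(λ₁,…,λₙ) = α(λₙ)·S_{n−1}(λ₁,…,λ_{n−2}, λ_{n−1} + ε·λₙ)
             + q·β(λₙ)·S_{n−1}(λ₁,…,λ_{n−2}, λ_{n−1} + ε′·λₙ)`.
This is the ordered contraction–deletion recurrence of the generalized Tutte polynomial on
the chain graph with `n` edges and `n+1` vertices, processed from the last edge to the
first, with boundary condition `q^m` on `m` isolated vertices. -/
def Schain {R : Type*} [CommRing R] (q : R) (α β : R → R) (ε ε' : R) :
    ℕ → (ℕ → R) → R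
  | 0, _ => q
  | n + 1, lam =>
      α (lam (n + 1)) *
          Schain q α β ε ε' n (Function.update lam n (lam n + ε * lam (n + 1)))
        + q * β (lam (n + 1)) *
            Schain q α β ε ε' n (Function.update lam n (lam n + ε' * lam (n + 1)))

/-- Auxiliary downward recursion for the modified chain weights:
`νⱼ = μ^B_{n−j}`, i.e. `ν₀ = λₙ` and
`ν_{j+1} = λ_{n−(j+1)} + (ε if n−j ∈ B else ε′)·νⱼ`. -/
def nuChain {R : Type*} [CommRing R] (ε ε' : R) (n : ℕ) (B : Finset ℕ) (lam : ℕ → R) :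
    ℕ → R
  | 0 => lam n
  | j + 1 => lam (n - (j + 1)) + (if n - j ∈ B then ε else ε') * nuChain ε ε' n B lam j

/-- The modified chain weights, defined downward: `μ^B_n = λₙ` and, for `1 ≤ k < n`,
`μ^B_k = λ_k + ε·μ^B_{k+1}` if `k+1 ∈ B` and `μ^B_k = λ_k + ε′·μ^B_{k+1}` if `k+1 ∉ B`. -/
def muChain {R : Type*} [CommRing R] (ε ε' : R) (n : ℕ) (B : Finset ℕ) (lam : ℕ → R)
    (k : ℕ) : R :=
  nuChain ε ε' n B lam (n - k)

/-!
Attach the factor `q` of each deletion to the deleted edge, so that a subset `B` contributes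
`q · ∏ₖ wₖ`, with `wₖ = α(μ^B_k)` for `k ∈ B` and `wₖ = q · β(μ^B_k)` for `k ∉ B`. As the modified
weights are computed downward from `μ^B_{n+1} = λ_{n+1}`, shifting `λₙ` by the multiple of `λ_{n+1}`
prescribed by the last edge leaves `μ^B_1, …, μ^B_n` unchanged. Hence splitting the sum over `B`
according to whether `n + 1 ∈ B` is exactly the contraction–deletion recurrence.
-/

section

variable {R : Type*} [CommRing R] (q : R) (α β : R → R) (ε ε' : R)

/-- The edge weights that remain once edge `n + 1` has been processed with shift coefficient `e`:
`λₙ` becomes `λₙ + e·λ_{n+1}`. The entry at `n + 1` is left in place and no longer matters. -/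
def shiftLast (e : R) (n : ℕ) (lam : ℕ → R) : ℕ → R :=
  Function.update lam n (lam n + e * lam (n + 1))

theorem Schain_succ (n : ℕ) (lam : ℕ → R) :
    Schain q α β ε ε' (n + 1) lam =
      α (lam (n + 1)) * Schain q α β ε ε' n (shiftLast ε n lam) +
        q * β (lam (n + 1)) * Schain q α β ε ε' n (shiftLast ε' n lam) :=
  rfl

theorem muChain_self (n : ℕ) (B : Finset ℕ) (lam : ℕ → R) :
    muChain ε ε' n B lam n = lam n := by
  rw [muChain, Nat.sub_self, nuChain]

theorem muChain_of_lt {n k : ℕ} (hk : k < n) (B : Finset ℕ) (lam : ℕ → R) :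
    muChain ε ε' n B lam k =
      lam k + (if k + 1 ∈ B then ε else ε') * muChain ε ε' n B lam (k + 1) := by
  have hsub : n - k = n - (k + 1) + 1 := by lia
  have hindex : n - (n - (k + 1) + 1) = k := by lia
  have hindex_succ : n - (n - (k + 1)) = k + 1 := by lia
  rw [muChain, hsub, nuChain, hindex, hindex_succ, muChain]

theorem muChain_congr {n k : ℕ} (hk : k ≤ n) {B C : Finset ℕ}
    (hBC : ∀ i ∈ Ioc k n, i ∈ B ↔ i ∈ C) (lam : ℕ → R) :
    muChain ε ε' n B lam k = muChain ε ε' n C lam k := by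
  induction hk using Nat.decreasingInduction with
  | self => rw [muChain_self, muChain_self]
  | of_succ k hk ih =>
    have hhead : k + 1 ∈ B ↔ k + 1 ∈ C := hBC (k + 1) (mem_Ioc.mpr ⟨k.lt_succ_self, hk⟩)
    have htail : ∀ i ∈ Ioc (k + 1) n, i ∈ B ↔ i ∈ C := fun i hi =>
      hBC i (Ioc_subset_Ioc_left k.le_succ hi)
    rw [muChain_of_lt ε ε' hk, muChain_of_lt ε ε' hk, ih htail]
    simp only [hhead]

theorem muChain_succ_of_le {n k : ℕ} (hk : k ≤ n) (B : Finset ℕ) (lam : ℕ → R) :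
    muChain ε ε' (n + 1) B lam k =
      muChain ε ε' n B (shiftLast (if n + 1 ∈ B then ε else ε') n lam) k := by
  induction hk using Nat.decreasingInduction with
  | self =>
    rw [muChain_of_lt ε ε' n.lt_succ_self, muChain_self, muChain_self, shiftLast,
      Function.update_self]
  | of_succ k hk ih =>
    rw [muChain_of_lt ε ε' (hk.trans n.lt_succ_self), ih, muChain_of_lt ε ε' hk, shiftLast,
      Function.update_of_ne hk.ne]

/-- The product of the edge factors of the spanning subgraph `B` of the chain with `n` edges. Each
deleted edge carries its own factor `q`, so the contribution of `B` to the chain polynomial is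
`q * chainWeight q α β ε ε' n B lam`. -/
def chainWeight (n : ℕ) (B : Finset ℕ) (lam : ℕ → R) : R :=
  ∏ k ∈ Icc 1 n, if k ∈ B then α (muChain ε ε' n B lam k) else q * β (muChain ε ε' n B lam k)

theorem chainWeight_congr {n : ℕ} {B C : Finset ℕ} (hBC : ∀ i ∈ Icc 1 n, i ∈ B ↔ i ∈ C)
    (lam : ℕ → R) :
    chainWeight q α β ε ε' n B lam = chainWeight q α β ε ε' n C lam := by
  refine prod_congr rfl fun k hk => ?_
  have hmu : muChain ε ε' n B lam k = muChain ε ε' n C lam k :=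
    muChain_congr ε ε' (mem_Icc.mp hk).2
      (fun i hi => hBC i (mem_Icc.mpr ⟨Nat.one_le_of_lt (mem_Ioc.mp hi).1, (mem_Ioc.mp hi).2⟩)) lam
  simp only [hBC k hk, hmu]

theorem chainWeight_succ (n : ℕ) (B : Finset ℕ) (lam : ℕ → R) :
    chainWeight q α β ε ε' (n + 1) B lam =
      (if n + 1 ∈ B then α (lam (n + 1)) else q * β (lam (n + 1))) *
        chainWeight q α β ε ε' n B (shiftLast (if n + 1 ∈ B then ε else ε') n lam) := by
  rw [chainWeight, prod_Icc_succ_top n.succ_pos, muChain_self, mul_comm]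
  congr 1
  refine prod_congr rfl fun k hk => ?_
  rw [muChain_succ_of_le ε ε' (mem_Icc.mp hk).2]

theorem chainWeight_succ_of_notMem {n : ℕ} {B : Finset ℕ} (hB : n + 1 ∉ B) (lam : ℕ → R) :
    chainWeight q α β ε ε' (n + 1) B lam =
      q * β (lam (n + 1)) * chainWeight q α β ε ε' n B (shiftLast ε' n lam) := by
  rw [chainWeight_succ, if_neg hB, if_neg hB]

theorem chainWeight_succ_insert (n : ℕ) (B : Finset ℕ) (lam : ℕ → R) :
    chainWeight q α β ε ε' (n + 1) (insert (n + 1) B) lam =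
      α (lam (n + 1)) * chainWeight q α β ε ε' n B (shiftLast ε n lam) := by
  have hmem : n + 1 ∈ insert (n + 1) B := mem_insert_self _ _
  have hagree : ∀ i ∈ Icc 1 n, i ∈ insert (n + 1) B ↔ i ∈ B := fun i hi =>
    mem_insert.trans (or_iff_right (Nat.lt_succ_of_le (mem_Icc.mp hi).2).ne)
  rw [chainWeight_succ, if_pos hmem, if_pos hmem, chainWeight_congr q α β ε ε' hagree]

theorem sum_chainWeight_succ (n : ℕ) (lam : ℕ → R) :
    ∑ B ∈ (Icc 1 (n + 1)).powerset, chainWeight q α β ε ε' (n + 1) B lam =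
      α (lam (n + 1)) *
          ∑ B ∈ (Icc 1 n).powerset, chainWeight q α β ε ε' n B (shiftLast ε n lam) +
        q * β (lam (n + 1)) *
          ∑ B ∈ (Icc 1 n).powerset, chainWeight q α β ε ε' n B (shiftLast ε' n lam) := by
  have hlast : n + 1 ∉ Icc 1 n := by simp
  rw [← insert_Icc_right_eq_Icc_add_one n.succ_pos, sum_powerset_insert hlast, add_comm,
    mul_sum, mul_sum]
  congr 1 <;> refine sum_congr rfl fun B hB => ?_
  · exact chainWeight_succ_insert q α β ε ε' n B lam
  · exact chainWeight_succ_of_notMem q α β ε ε' (notMem_mono (mem_powerset.mp hB) hlast) lam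

theorem Schain_eq_mul_sum_chainWeight (n : ℕ) (lam : ℕ → R) :
    Schain q α β ε ε' n lam =
      q * ∑ B ∈ (Icc 1 n).powerset, chainWeight q α β ε ε' n B lam := by
  induction n generalizing lam with
  | zero => simp [Schain, chainWeight]
  | succ n ih =>
    rw [Schain_succ, ih, ih, sum_chainWeight_succ]
    ring

theorem mul_chainWeight_of_subset {n : ℕ} {B : Finset ℕ} (hB : B ⊆ Icc 1 n) (lam : ℕ → R) :
    q * chainWeight q α β ε ε' n B lam =
      q ^ (n + 1 - B.card) * (∏ k ∈ B, α (muChain ε ε' n B lam k)) *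
        ∏ k ∈ Icc 1 n \ B, β (muChain ε ε' n B lam k) := by
  have hcard_le : B.card ≤ n := by simpa using card_le_card hB
  have hcard_sdiff : (Icc 1 n \ B).card = n - B.card := by
    rw [card_sdiff_of_subset hB, Nat.card_Icc, Nat.add_sub_cancel]
  rw [chainWeight, prod_ite, filter_mem_eq_inter, inter_eq_right.mpr hB, filter_notMem_eq_sdiff,
    prod_mul_distrib, prod_const, hcard_sdiff, Nat.succ_sub hcard_le, pow_succ]
  ring

end

/-- For every `n ≥ 1` and all `λ₁, …, λₙ ∈ R`, the chain polynomial
admits the spanning-subset closed form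
`Sₙ(λ₁,…,λₙ) = Σ_{B ⊆ {1,…,n}} q^{n+1−|B|} · (∏_{k∈B} α(μ^B_k)) · (∏_{k∉B} β(μ^B_k))`. -/
theorem Schain_closed_form {R : Type*} [CommRing R]
    (q : R) (α β : R → R) (ε ε' : R) (n : ℕ) (hn : 1 ≤ n) (lam : ℕ → R) :
    Schain q α β ε ε' n lam
      = ∑ B ∈ (Finset.Icc 1 n).powerset,
          q ^ (n + 1 - B.card) * (∏ k ∈ B, α (muChain ε ε' n B lam k)) *
            ∏ k ∈ Finset.Icc 1 n \ B, β (muChain ε ε' n B lam k) := by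
  rw [Schain_eq_mul_sum_chainWeight, mul_sum]
  exact sum_congr rfl fun B hB =>
    mul_chainWeight_of_subset q α β ε ε' (mem_powerset.mp hB) lam
end

section
/- For every n ≥ 1 and all real numbers λ_1, …, λ_n such that μ^B_k ≠ 0 for every B ⊆ {1,…,n} and every 1 ≤ k ≤ n — where μ^B_n = λ_n and, for 1 ≤ k < n, μ^B_k = λ_k if k+1 ∈ B and μ^B_k = λ_k + μ^B_{k+1} if k+1 ∉ B — one has the spanning-subset closed form s_n(λ_1,…,λ_n) = Σ_{B ⊆ {1,…,n}} (∏_{k ∈ B} e^{μ^B_k}/μ^B_k) · (∏_{k ∉ B} (−1/μ^B_k)). -/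
open Finset

/-- The functions governing the moments of the integrated geometric Brownian motion
in the Ito formalism: `s₀ = 1` and, for `k ≥ 1`,
`s_k(λ₁,…,λ_k) = (e^{λ_k}/λ_k)·s_{k−1}(λ₁,…,λ_{k−1})
               − (1/λ_k)·s_{k−1}(λ₁,…,λ_{k−2}, λ_{k−1}+λ_k)`. -/
noncomputable def sGBM : ℕ → (ℕ → ℝ) → ℝ
  | 0, _ => 1
  | k + 1, lam =>
      (Real.exp (lam (k + 1)) / lam (k + 1)) * sGBM k lam
        - (1 / lam (k + 1)) * sGBM k (Function.update lam k (lam k + lam (k + 1)))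

/-- Auxiliary downward recursion for the modified weights: `νⱼ = μ^B_{n−j}`, i.e.
`ν₀ = λₙ` and `ν_{j+1} = λ_{n−(j+1)}` if `n−j ∈ B`, `ν_{j+1} = λ_{n−(j+1)} + νⱼ` else. -/
def nuGBM (n : ℕ) (B : Finset ℕ) (lam : ℕ → ℝ) : ℕ → ℝ
  | 0 => lam n
  | j + 1 =>
      if n - j ∈ B then lam (n - (j + 1)) else lam (n - (j + 1)) + nuGBM n B lam j

/-- The modified weights, defined downward: `μ^B_n = λₙ` and, for `1 ≤ k < n`,
`μ^B_k = λ_k` if `k+1 ∈ B` and `μ^B_k = λ_k + μ^B_{k+1}` if `k+1 ∉ B`. -/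
def muGBM (n : ℕ) (B : Finset ℕ) (lam : ℕ → ℝ) (k : ℕ) : ℝ :=
  nuGBM n B lam (n - k)

/-!
A subset of `{1, …, n + 1}` either contains `n + 1` or is a subset of `{1, …, n}`. If `n + 1 ∈ B`,
then `λ_{n+1}` decouples from the lower modified weights, which are those of `B \ {n + 1}` for
`(λ₁, …, λₙ)`; if `n + 1 ∉ B`, then `λ_{n+1}` is absorbed into `λₙ`, and the lower modified weights
are those of `B` for `(λ₁, …, λₙ + λ_{n+1})`. Splitting the sum accordingly gives the two terms of
the recursion for `s_{n+1}`. The same splitting works for arbitrary factors `f (μ^B_k)` for `k ∈ B`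
and `g (μ^B_k)` for `k ∉ B` in place of `eˣ/x` and `-1/x`.
-/

theorem muGBM_self (n : ℕ) (B : Finset ℕ) (lam : ℕ → ℝ) : muGBM n B lam n = lam n := by
  simp [muGBM, nuGBM]

theorem muGBM_of_lt {n k : ℕ} (hk : k < n) (B : Finset ℕ) (lam : ℕ → ℝ) :
    muGBM n B lam k = if k + 1 ∈ B then lam k else lam k + muGBM n B lam (k + 1) := by
  have hstep : n - (k + 1) + 1 = n - k := by omega
  rw [muGBM, muGBM, ← hstep, nuGBM, hstep, Nat.sub_sub_self hk, Nat.sub_sub_self hk.le]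

theorem muGBM_succ_insert {n k : ℕ} (hk : k ≤ n) (B : Finset ℕ) (lam : ℕ → ℝ) :
    muGBM (n + 1) (insert (n + 1) B) lam k = muGBM n B lam k := by
  induction hk using Nat.decreasingInduction with
  | self => rw [muGBM_of_lt n.lt_succ_self, if_pos (mem_insert_self _ _), muGBM_self]
  | of_succ k hk ih =>
    have hmem : k + 1 ∈ insert (n + 1) B ↔ k + 1 ∈ B :=
      mem_insert.trans (or_iff_right (by omega))
    rw [muGBM_of_lt (Nat.lt_succ_of_lt hk), muGBM_of_lt hk, ih]
    simp only [hmem]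

theorem muGBM_succ_of_notMem {n k : ℕ} (hk : k ≤ n) {B : Finset ℕ} (hB : n + 1 ∉ B)
    (lam : ℕ → ℝ) :
    muGBM (n + 1) B lam k = muGBM n B (Function.update lam n (lam n + lam (n + 1))) k := by
  induction hk using Nat.decreasingInduction with
  | self =>
    rw [muGBM_of_lt n.lt_succ_self, if_neg hB, muGBM_self, muGBM_self, Function.update_self]
  | of_succ k hk ih =>
    rw [muGBM_of_lt (Nat.lt_succ_of_lt hk), muGBM_of_lt hk, ih, Function.update_of_ne hk.ne]

section SpanningSum

variable {R : Type*} [CommSemiring R]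

/-- The contribution of `B ⊆ {1, …, n}` to the spanning-subset expansion: `f (μ^B_k)` for each
`k ∈ B` times `g (μ^B_k)` for each `k ∉ B`. The moments use `f x = eˣ/x` and `g x = -1/x`. -/
def spanningTerm (f g : ℝ → R) (n : ℕ) (lam : ℕ → ℝ) (B : Finset ℕ) : R :=
  (∏ k ∈ B, f (muGBM n B lam k)) * ∏ k ∈ Icc 1 n \ B, g (muGBM n B lam k)

/-- The spanning-subset expansion with factors `f` and `g`: the sum of `spanningTerm f g n lam B`
over all `B ⊆ {1, …, n}`. -/
def spanningSum (f g : ℝ → R) (n : ℕ) (lam : ℕ → ℝ) : R :=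
  ∑ B ∈ (Icc 1 n).powerset, spanningTerm f g n lam B

variable (f g : ℝ → R) {n : ℕ} (lam : ℕ → ℝ) {B : Finset ℕ}

theorem spanningTerm_succ_insert (hB : B ⊆ Icc 1 n) :
    spanningTerm f g (n + 1) lam (insert (n + 1) B)
      = f (lam (n + 1)) * spanningTerm f g n lam B := by
  have htop : n + 1 ∉ Icc 1 n := by simp
  have hcompl : Icc 1 (n + 1) \ insert (n + 1) B = Icc 1 n \ B := by
    rw [← insert_Icc_right_eq_Icc_add_one (by omega), insert_sdiff_insert,
      sdiff_insert_of_notMem htop]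
  have hmu : ∀ k ∈ Icc 1 n, muGBM (n + 1) (insert (n + 1) B) lam k = muGBM n B lam k :=
    fun k hk => muGBM_succ_insert (mem_Icc.mp hk).2 B lam
  rw [spanningTerm, spanningTerm, hcompl, prod_insert (notMem_mono hB htop), muGBM_self, mul_assoc,
    prod_congr rfl fun k hk => congrArg f (hmu k (hB hk)),
    prod_congr rfl fun k hk => congrArg g (hmu k (sdiff_subset hk))]

theorem spanningTerm_succ_of_subset (hB : B ⊆ Icc 1 n) :
    spanningTerm f g (n + 1) lam B
      = g (lam (n + 1))
        * spanningTerm f g n (Function.update lam n (lam n + lam (n + 1))) B := by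
  have htop : n + 1 ∉ Icc 1 n := by simp
  have hB' : n + 1 ∉ B := notMem_mono hB htop
  have hcompl : Icc 1 (n + 1) \ B = insert (n + 1) (Icc 1 n \ B) := by
    rw [← insert_Icc_right_eq_Icc_add_one (by omega), insert_sdiff_of_notMem _ hB']
  have hmu : ∀ k ∈ Icc 1 n, muGBM (n + 1) B lam k
      = muGBM n B (Function.update lam n (lam n + lam (n + 1))) k :=
    fun k hk => muGBM_succ_of_notMem (mem_Icc.mp hk).2 hB' lam
  rw [spanningTerm, spanningTerm, hcompl, prod_insert (notMem_mono sdiff_subset htop), muGBM_self,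
    mul_left_comm,
    prod_congr rfl fun k hk => congrArg f (hmu k (hB hk)),
    prod_congr rfl fun k hk => congrArg g (hmu k (sdiff_subset hk))]

theorem spanningSum_zero : spanningSum f g 0 lam = 1 := by
  simp [spanningSum, spanningTerm]

theorem spanningSum_succ (n : ℕ) :
    spanningSum f g (n + 1) lam
      = f (lam (n + 1)) * spanningSum f g n lam
        + g (lam (n + 1)) * spanningSum f g n (Function.update lam n (lam n + lam (n + 1))) := by
  have htop : n + 1 ∉ Icc 1 n := by simp
  simp only [spanningSum]
  rw [← insert_Icc_right_eq_Icc_add_one (by omega), sum_powerset_insert htop, add_comm, mul_sum,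
    mul_sum]
  congr 1
  · exact sum_congr rfl fun B hB => spanningTerm_succ_insert f g lam (mem_powerset.mp hB)
  · exact sum_congr rfl fun B hB => spanningTerm_succ_of_subset f g lam (mem_powerset.mp hB)

end SpanningSum

/-- For every `n ≥ 1` and all real numbers `λ₁, …, λₙ` such that
`μ^B_k ≠ 0` for every `B ⊆ {1,…,n}` and every `1 ≤ k ≤ n`, one has the spanning-subset
closed form
`sₙ(λ₁,…,λₙ) = Σ_{B ⊆ {1,…,n}} (∏_{k∈B} e^{μ^B_k}/μ^B_k) · (∏_{k∉B} (−1/μ^B_k))`. -/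
theorem sGBM_closed_form (n : ℕ) (hn : 1 ≤ n) (lam : ℕ → ℝ)
    (hne : ∀ B ⊆ Finset.Icc 1 n, ∀ k, 1 ≤ k → k ≤ n → muGBM n B lam k ≠ 0) :
    sGBM n lam
      = ∑ B ∈ (Finset.Icc 1 n).powerset,
          (∏ k ∈ B, Real.exp (muGBM n B lam k) / muGBM n B lam k) *
            ∏ k ∈ Finset.Icc 1 n \ B, (-1) / muGBM n B lam k := by
  change sGBM n lam = spanningSum (fun x => Real.exp x / x) (fun x => -1 / x) n lam
  clear hn hne
  induction n generalizing lam with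
  | zero => rw [sGBM, spanningSum_zero]
  | succ n ih =>
    rw [sGBM, ih, ih, spanningSum_succ]
    ring
end
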